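/- For every finite string W over {A, X, B}, one has |(WX)| + 2|(WB)| − |W| = 0, where |(·)| denotes the cyclic value and |W| the open value in the tight puzzle. -/

import Mathlib

/-!
The "tight puzzle" of Schwartz–Tabachnikov.  Strings over the alphabet `{A, X, B}`;
word list (coefficient, weight): `X (1,0)`, `XA (1,1)`, `XAA (1,1)`, `AXA (2,1)`,
`AAA (-1,1)`, `BA (-1,1)`, `ABA (-1,1)`, `XXA (-1,1)`; in a parsing the word `X` may
never be immediately followed by the word `XA` or the word `BA`.
-/

open scoped Classical

/-- The three-letter alphabet. -/
inductive PLetter | A | X | B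
deriving DecidableEq

/-- Strings over the alphabet. -/
abbrev PWord := List PLetter

/-- The tight puzzle word list. -/
def tightWords : List PWord :=
  [[PLetter.X], [PLetter.X, PLetter.A], [PLetter.X, PLetter.A, PLetter.A],
   [PLetter.A, PLetter.X, PLetter.A], [PLetter.A, PLetter.A, PLetter.A],
   [PLetter.B, PLetter.A], [PLetter.A, PLetter.B, PLetter.A],
   [PLetter.X, PLetter.X, PLetter.A]]

/-- Coefficients of the words of the tight puzzle (`AXA ↦ 2`; `AAA, BA, ABA, XXA ↦ -1`;
`X, XA, XAA ↦ 1`). -/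
def tightCoeff (w : PWord) : ℤ :=
  if w = [PLetter.A, PLetter.X, PLetter.A] then 2
  else if w = [PLetter.A, PLetter.A, PLetter.A] ∨ w = [PLetter.B, PLetter.A] ∨
      w = [PLetter.A, PLetter.B, PLetter.A] ∨ w = [PLetter.X, PLetter.X, PLetter.A] then -1
  else 1

/-- Weights of the words: the word `X` has weight `0`, all other words weight `1`. -/
def wordWt (w : PWord) : ℕ := if w = [PLetter.X] then 0 else 1

/-- The forbidden adjacency: the word `X` immediately followed by `XA` or `BA`. -/
def Bad (u v : PWord) : Prop :=
  u = [PLetter.X] ∧ (v = [PLetter.X, PLetter.A] ∨ v = [PLetter.B, PLetter.A])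

/-- The contribution `coefficient · t^weight ∈ ℤ[t]` of a parsing `L`. -/
noncomputable def parseVal (c : PWord → ℤ) (L : List PWord) : Polynomial ℤ :=
  Polynomial.C ((L.map c).prod) * Polynomial.X ^ ((L.map wordWt).sum)

/-- `L` is a parsing in the tight puzzle: all its words are on the word list and the
forbidden adjacency never occurs. -/
def TightChain (L : List PWord) : Prop :=
  (∀ w ∈ L, w ∈ tightWords) ∧ List.Chain' (fun u v => ¬ Bad u v) L

/-- The *core* of a string: what remains after deleting all leading and trailing `X`s. -/
def core (s : PWord) : PWord :=
  ((s.dropWhile (· == PLetter.X)).reverse.dropWhile (· == PLetter.X)).reverse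

/-- `L` is a parsing of the bi-infinite string `⋯XX·W·XX⋯` (with the infinitely many
padding `X`s parsed as copies of the word `X` and trimmed away): the words of `L`
concatenate to `W` up to padding by `X`s on either side, `L` neither starts nor ends
with the word `X`, and (because of the padding `X`-words on the left) the first word
of `L` is not `XA` or `BA`. -/
def IsOpenParsing (W : PWord) (L : List PWord) : Prop :=
  TightChain L ∧ core L.flatten = core W ∧
  ∀ h : L ≠ [],
    L.head h ≠ [PLetter.X] ∧ L.head h ≠ [PLetter.X, PLetter.A] ∧
    L.head h ≠ [PLetter.B, PLetter.A] ∧ L.getLast h ≠ [PLetter.X]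

/-- `(r, L)` is a parsing of the cyclic string `(W)`: reading the necklace of the
letters of `W` starting at position `r`, the words of `L` concatenate to it, the
forbidden adjacency does not occur (cyclically), and `r < (last word).length`
(so that every parsing of the necklace is counted exactly once). -/
def IsCyclicParsing (W : PWord) (r : ℕ) (L : List PWord) : Prop :=
  TightChain L ∧
  ∃ h : L ≠ [], L.flatten = W.rotate r ∧ r < (L.getLast h).length ∧
    ¬ Bad (L.getLast h) (L.head h)

/-- `L` is a parsing of the locked string `[W]`: the words of `L` concatenate exactly
to `W`, no padding allowed. -/
def IsLockedParsing (W : PWord) (L : List PWord) : Prop :=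
  TightChain L ∧ L.flatten = W

/-- The nine words of both puzzles, as a function (used to enumerate parsings). -/
def wordOf : Fin 9 → PWord :=
  ![[PLetter.X], [PLetter.X, PLetter.A], [PLetter.X, PLetter.A, PLetter.A],
    [PLetter.X, PLetter.B, PLetter.A], [PLetter.A, PLetter.X, PLetter.A],
    [PLetter.A, PLetter.A, PLetter.A], [PLetter.B, PLetter.A],
    [PLetter.A, PLetter.B, PLetter.A], [PLetter.X, PLetter.X, PLetter.A]]

/-- The open value `|W| ∈ ℤ[t]`: the sum of `coefficient · t^weight` over all parsings
of the bi-infinite string `⋯XX·W·XX⋯` (any such parsing consists of at most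
`W.length + 2` words). -/
noncomputable def openVal (W : PWord) : Polynomial ℤ :=
  ∑ k ∈ Finset.range (W.length + 3), ∑ f : Fin k → Fin 9,
    if IsOpenParsing W ((List.ofFn f).map wordOf) then
      parseVal tightCoeff ((List.ofFn f).map wordOf)
    else 0

/-- The cyclic value `|(W)| ∈ ℤ[t]`: the sum of `coefficient · t^weight` over all
parsings of the cyclic string `(W)`. -/
noncomputable def cycVal (W : PWord) : Polynomial ℤ :=
  ∑ r ∈ Finset.range W.length, ∑ k ∈ Finset.range (W.length + 1), ∑ f : Fin k → Fin 9,
    if IsCyclicParsing W r ((List.ofFn f).map wordOf) then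
      parseVal tightCoeff ((List.ofFn f).map wordOf)
    else 0

/-- The locked value `|[W]| ∈ ℤ[t]`: the sum of `coefficient · t^weight` over all
parsings whose concatenation is exactly `W`. -/
noncomputable def lockVal (W : PWord) : Polynomial ℤ :=
  ∑ k ∈ Finset.range (W.length + 1), ∑ f : Fin k → Fin 9,
    if IsLockedParsing W ((List.ofFn f).map wordOf) then
      parseVal tightCoeff ((List.ofFn f).map wordOf)
    else 0

open PLetter

/-- The contribution of a single word. -/
noncomputable def wordVal (w : PWord) : Polynomial ℤ :=
  Polynomial.C (tightCoeff w) * Polynomial.X ^ wordWt w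

theorem parseVal_nil : parseVal tightCoeff [] = 1 := by simp [parseVal]

theorem parseVal_append (L M : List PWord) :
    parseVal tightCoeff (L ++ M) = parseVal tightCoeff L * parseVal tightCoeff M := by
  simp only [parseVal, List.map_append, List.prod_append, List.sum_append, map_mul, pow_add]
  ring

theorem parseVal_singleton (w : PWord) : parseVal tightCoeff [w] = wordVal w := by
  simp [parseVal, wordVal]

theorem parseVal_cons (w : PWord) (L : List PWord) :
    parseVal tightCoeff (w :: L) = wordVal w * parseVal tightCoeff L := by
  rw [← parseVal_singleton, ← parseVal_append, List.singleton_append]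

/-- Sum of `F` over all lists of fewer than `K` of the nine words. -/
noncomputable def wordSum (K : ℕ) (F : List PWord → Polynomial ℤ) : Polynomial ℤ :=
  ∑ k ∈ Finset.range K, ∑ f : Fin k → Fin 9, F ((List.ofFn f).map wordOf)

theorem wordSum_congr {K : ℕ} {F G : List PWord → Polynomial ℤ} (h : ∀ L, F L = G L) :
    wordSum K F = wordSum K G := by
  rw [funext h]

theorem wordSum_mul_left (K : ℕ) (c : Polynomial ℤ) (F : List PWord → Polynomial ℤ) :
    wordSum K (fun L => c * F L) = c * wordSum K F := by
  simp [wordSum, Finset.mul_sum]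

theorem wordSum_zero (K : ℕ) : wordSum K (fun _ => 0) = 0 := by
  simp [wordSum]

theorem wordSum_succ_cons (K : ℕ) (F : List PWord → Polynomial ℤ) :
    wordSum (K + 1) F = F [] + ∑ i, wordSum K (fun L => F (wordOf i :: L)) := by
  simp only [wordSum]
  rw [Finset.sum_range_succ', add_comm, Finset.sum_comm]
  congr 1
  · simp
  · refine Finset.sum_congr rfl fun k _ => ?_
    rw [← (Fin.consEquiv fun _ => Fin 9).sum_comp, Fintype.sum_prod_type]
    simp [Fin.consEquiv, List.ofFn_succ]

theorem wordSum_succ_snoc (K : ℕ) (F : List PWord → Polynomial ℤ) :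
    wordSum (K + 1) F = F [] + ∑ i, wordSum K (fun L => F (L ++ [wordOf i])) := by
  simp only [wordSum]
  rw [Finset.sum_range_succ', add_comm, Finset.sum_comm]
  congr 1
  · simp
  · refine Finset.sum_congr rfl fun k _ => ?_
    rw [← (Fin.snocEquiv fun _ => Fin 9).sum_comp, Fintype.sum_prod_type]
    simp only [Fin.snocEquiv_apply, List.ofFn_succ', Fin.snoc_castSucc, Fin.snoc_last,
      List.concat_eq_append, List.map_append, List.map_cons, List.map_nil]

/-- The sum of the values of the parsings of a string, where `b` says whether the word before
the string is `X` and `e` whether the word after it is one that may not follow `X`. -/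
noncomputable def parsePoly (e : Bool) : Bool → PWord → Polynomial ℤ
  | b, [] => if b && e then 0 else 1
  | _, A :: A :: A :: s => -Polynomial.X * parsePoly e false s
  | _, A :: X :: A :: s => 2 * Polynomial.X * parsePoly e false s
  | _, A :: B :: A :: s => -Polynomial.X * parsePoly e false s
  | b, B :: A :: s => if b then 0 else -Polynomial.X * parsePoly e false s
  | _, X :: X :: A :: s =>
      parsePoly e true (X :: A :: s) - Polynomial.X * parsePoly e false s
  | b, X :: A :: A :: s => (if b then 0 else Polynomial.X * parsePoly e false (A :: s)) +
      Polynomial.X * parsePoly e false s + parsePoly e true (A :: A :: s)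
  | b, X :: A :: s => (if b then 0 else Polynomial.X * parsePoly e false s) +
      parsePoly e true (A :: s)
  | _, X :: s => parsePoly e true s
  | _, _ => 0

theorem tightChain_iff (L : List PWord) : TightChain L ↔
    (∀ w ∈ L, w ∈ tightWords) ∧ List.IsChain (fun u v => ¬ Bad u v) L :=
  Iff.rfl

/-- The contribution of `L` as a parsing of `s` between the words `p` and `q`. -/
noncomputable def between (p q s : PWord) (L : List PWord) : Polynomial ℤ :=
  if (∀ w ∈ L, w ∈ tightWords) ∧ List.IsChain (fun u v => ¬ Bad u v) (p :: (L ++ [q])) ∧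
      L.flatten = s then parseVal tightCoeff L else 0

theorem between_cons (p q s w : PWord) (L : List PWord) :
    between p q s (w :: L) = if w ∈ tightWords ∧ ¬ Bad p w ∧ w <+: s then
      wordVal w * between w q (s.drop w.length) L else 0 := by
  by_cases h : w <+: s
  · obtain ⟨m, rfl⟩ := h
    by_cases h1 : w ∈ tightWords <;> by_cases h2 : Bad p w <;>
      simp [between, h1, h2, parseVal_cons]
  · have : w ++ L.flatten ≠ s := fun h' => h ⟨_, h'⟩
    simp [between, h, this]

theorem wordSum_between {K : ℕ} (p q s : PWord) (h : s.length < K) :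
    wordSum K (between p q s) =
      parsePoly (decide (q = [X, A] ∨ q = [B, A])) (decide (p = [X])) s := by
  induction K generalizing p s with
  | zero => omega
  | succ K ih =>
    have step (w : PWord) (hw : w ≠ []) : wordSum K (fun L => between p q s (w :: L)) =
        if w ∈ tightWords ∧ ¬ Bad p w ∧ w <+: s then wordVal w *
          parsePoly (decide (q = [X, A] ∨ q = [B, A])) (decide (w = [X])) (s.drop w.length)
        else 0 := by
      simp only [between_cons]
      split_ifs with hc
      · rw [wordSum_mul_left, ih]
        have := hc.2.2.length_le
        have := List.length_pos_of_ne_nil hw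
        simp only [List.length_drop]
        omega
      · exact wordSum_zero K
    have hne (i : Fin 9) : wordOf i ≠ [] := by fin_cases i <;> simp [wordOf]
    rw [wordSum_succ_cons, Finset.sum_congr rfl fun i _ => step _ (hne i)]
    simp only [Fin.sum_univ_succ]
    rcases s with _ | ⟨a, _ | ⟨b, _ | ⟨c, s⟩⟩⟩ <;> try rcases a <;> try rcases b <;> try rcases c
    all_goals
      by_cases hp : p = [X] <;>
      simp [wordOf, tightWords, Bad, hp, between, parsePoly, wordVal, tightCoeff, wordWt,
          parseVal_nil] <;>
      first | ring1 | grind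

theorem parsePoly_append_X (e b : Bool) (s : PWord) :
    parsePoly e b (s ++ [X]) = if e then 0 else parsePoly e b s := by
  induction hn : s.length using Nat.strong_induction_on generalizing s b with
  | _ n ih =>
    subst hn
    rcases s with _ | ⟨x, _ | ⟨y, _ | ⟨z, s⟩⟩⟩
    · cases e <;> simp [parsePoly]
    · rcases x <;> cases e <;> simp [parsePoly]
    · rcases x <;> rcases y <;> cases e <;> simp [parsePoly]
    · have h0 b := ih s.length (by simp; omega) b s rfl
      have h1 b := ih (z :: s).length (by simp) b (z :: s) rfl
      have h2 b := ih (y :: z :: s).length (by simp) b (y :: z :: s) rfl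
      simp only [List.cons_append] at h1 h2 ⊢
      rcases x <;> rcases y <;> rcases z <;> cases e <;> simp [parsePoly, h0, h1, h2]

theorem parsePoly_append_ne_X {c : PLetter} (hc : c ≠ X) (e b : Bool) (s : PWord) :
    parsePoly e b (s ++ [c]) = parsePoly false b (s ++ [c]) := by
  induction hn : s.length using Nat.strong_induction_on generalizing s b with
  | _ n ih =>
    subst hn
    rcases s with _ | ⟨x, _ | ⟨y, _ | ⟨z, s⟩⟩⟩
    · rcases c <;> simp_all [parsePoly]
    · rcases c <;> rcases x <;> simp_all [parsePoly]
    · rcases c <;> rcases x <;> rcases y <;> simp_all [parsePoly]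
    · have h0 b := ih s.length (by simp; omega) b s rfl
      have h1 b := ih (z :: s).length (by simp) b (z :: s) rfl
      have h2 b := ih (y :: z :: s).length (by simp) b (y :: z :: s) rfl
      simp only [List.cons_append] at h1 h2 ⊢
      rcases x <;> rcases y <;> rcases z <;> simp [parsePoly, h0, h1, h2]

/-- The value `parsePoly e b m` if `V = p ++ m ++ u`, and `0` if `V` is not of this form. -/
noncomputable def gap (e b : Bool) (p u V : PWord) : Polynomial ℤ :=
  if p <+: V ∧ u <:+ V.drop p.length then
    parsePoly e b ((V.drop p.length).rdrop u.length) else 0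

theorem gap_eq_zero {e b : Bool} {p u V : PWord} (h : V.length < p.length) :
    gap e b p u V = 0 :=
  if_neg fun hp => by have := hp.1.length_le; omega

theorem wordSum_gap {K : ℕ} (w q p u V : PWord) (hK : V.length < K) :
    wordSum K (fun L => if (∀ w' ∈ L, w' ∈ tightWords) ∧
        List.IsChain (fun u v => ¬ Bad u v) (w :: (L ++ [q])) ∧ V = p ++ (L.flatten ++ u) then
      parseVal tightCoeff L else 0) =
    gap (decide (q = [X, A] ∨ q = [B, A])) (decide (w = [X])) p u V := by
  rw [gap]
  split_ifs with h
  · obtain ⟨⟨m, rfl⟩, h⟩ := h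
    rw [List.drop_left] at h ⊢
    obtain ⟨m, rfl⟩ := h
    rw [← wordSum_between (K := K)]
    · refine wordSum_congr fun L => ?_
      simp [between, eq_comm, List.rdrop_append_length]
    · simp [List.rdrop_append_length] at hK ⊢
      omega
  · refine (wordSum_congr fun L => if_neg fun h' => h ?_).trans (wordSum_zero K)
    simp [h'.2.2]

/-- The value of the cyclic parsings of `(V c)` in which the last letter `c` is covered by the
word `w` with `r` letters of `w` following it. -/
noncomputable def coverVal (V : PWord) (c : PLetter) (w : PWord) (r : ℕ) : Polynomial ℤ :=
  if w ∈ tightWords ∧ w.reverse[r]? = some c then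
    wordVal w * gap (decide (w = [X, A] ∨ w = [B, A])) (decide (w = [X]))
      (w.drop (w.length - r)) (w.take (w.length - 1 - r)) V
  else 0

theorem isCyclicParsing_concat_iff {V w u p : PWord} {c d : PLetter} (hw : w = u ++ d :: p)
    (hp : p.length ≤ V.length) (L : List PWord) :
    IsCyclicParsing (V ++ [c]) p.length (L ++ [w]) ↔
      (w ∈ tightWords ∧ d = c) ∧ (∀ w' ∈ L, w' ∈ tightWords) ∧
        List.IsChain (fun u v => ¬ Bad u v) (w :: (L ++ [w])) ∧ V = p ++ (L.flatten ++ u) := by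
  have hflat : (L ++ [w]).flatten = (V ++ [c]).rotate p.length ↔
      d = c ∧ V = p ++ (L.flatten ++ u) := by
    rw [List.rotate_eq_drop_append_take (by simp; omega), List.drop_append_of_le_length hp,
      List.take_append_of_le_length hp, hw]
    constructor
    · intro h
      have h' : (L.flatten ++ u ++ [d]) ++ p = (V.drop p.length ++ [c]) ++ V.take p.length := by
        simpa using h
      obtain ⟨h1, h2⟩ := List.append_inj' h' (by simp [hp])
      obtain ⟨h3, h4⟩ := List.append_inj' h1 rfl
      refine ⟨by simpa using h4, ?_⟩
      rw [h3]
      conv_rhs => enter [1]; rw [h2]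
      rw [List.take_append_drop]
    · rintro ⟨rfl, rfl⟩
      simp
  have hlen : p.length < w.length := by simp [hw]; omega
  have hchain : List.IsChain (fun u v => ¬ Bad u v) (w :: (L ++ [w])) ↔
      ¬ Bad w ((L ++ [w]).head (by simp)) ∧
        List.IsChain (fun u v => ¬ Bad u v) (L ++ [w]) := by
    cases L <;> simp
  rw [hchain]
  simp only [IsCyclicParsing, tightChain_iff, hflat]
  simp only [List.mem_append, List.mem_singleton, or_imp, forall_and, forall_eq,
    List.getLast_concat, hlen, true_and]
  grind

theorem wordSum_isCyclicParsing {V : PWord} {r : ℕ} (hr : r ≤ V.length) (c : PLetter) (w : PWord) :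
    wordSum (V.length + 1) (fun L => if IsCyclicParsing (V ++ [c]) r (L ++ [w]) then
      parseVal tightCoeff (L ++ [w]) else 0) = coverVal V c w r := by
  rcases lt_or_ge r w.length with h | h
  · obtain ⟨u, d, p, rfl, rfl⟩ : ∃ u d p, w = u ++ d :: p ∧ r = p.length := by
      refine ⟨w.take (w.length - 1 - r), w[w.length - 1 - r], w.drop (w.length - r), ?_, ?_⟩
      · have : w.length - r = w.length - 1 - r + 1 := by omega
        simp [this]
      · simp; omega
    simp only [isCyclicParsing_concat_iff rfl hr, coverVal]
    have h1 : (u ++ d :: p).drop ((u ++ d :: p).length - p.length) = p := by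
      have : (u ++ d :: p).length - p.length = (u ++ [d]).length := by simp; omega
      rw [this, List.append_cons u d p, List.drop_left]
    have h2 : (u ++ d :: p).take ((u ++ d :: p).length - 1 - p.length) = u := by
      have : (u ++ d :: p).length - 1 - p.length = u.length := by simp
      rw [this, List.take_left]
    have h3 : (u ++ d :: p).reverse[p.length]? = some d := by simp
    simp only [h1, h2, h3, Option.some_inj]
    split_ifs with hc
    · obtain ⟨hw, rfl⟩ := hc
      rw [← wordSum_gap _ _ _ _ _ (Nat.lt_succ_self V.length), ← wordSum_mul_left]
      refine wordSum_congr fun L => ?_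
      rw [parseVal_append, parseVal_singleton, mul_comm]
      simp only [hw, and_self, true_and, mul_ite, mul_zero]
    · simp [hc, wordSum_zero]
  · have h1 : w.reverse[r]? = none := by simp [h]
    have h2 (L : List PWord) : ¬ IsCyclicParsing (V ++ [c]) r (L ++ [w]) := by
      rintro ⟨-, hne, -, hlt, -⟩
      simp at hlt
      omega
    simp [coverVal, h1, h2, wordSum_zero]

theorem cycVal_concat (V : PWord) (c : PLetter) :
    cycVal (V ++ [c]) = ∑ i, ∑ r ∈ Finset.range 3, coverVal V c (wordOf i) r := by
  have key (r : ℕ) (hr : r ∈ Finset.range (V ++ [c]).length) :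
      wordSum ((V ++ [c]).length + 1) (fun L => if IsCyclicParsing (V ++ [c]) r L then
        parseVal tightCoeff L else 0) = ∑ i, coverVal V c (wordOf i) r := by
    have h0 : ¬ IsCyclicParsing (V ++ [c]) r [] := fun h => h.2.1 rfl
    have hr' : r ≤ V.length := by simpa [Nat.lt_succ_iff] using hr
    rw [wordSum_succ_snoc, if_neg h0, zero_add]
    refine Finset.sum_congr rfl fun i _ => ?_
    simpa using wordSum_isCyclicParsing hr' c (wordOf i)
  refine (Finset.sum_congr rfl key).trans ?_
  rw [Finset.sum_comm]
  refine Finset.sum_congr rfl fun i _ => ?_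
  have hlen : (wordOf i).length ≤ 3 := by fin_cases i <;> simp [wordOf]
  trans ∑ r ∈ Finset.range (V.length + 4), coverVal V c (wordOf i) r
  · refine Finset.sum_subset (by simp) fun r _ hr => ?_
    simp only [List.length_append, List.length_singleton, Finset.mem_range, not_lt] at hr
    rw [coverVal]
    split_ifs with h
    · obtain ⟨hlt, -⟩ := List.getElem?_eq_some_iff.mp h.2
      rw [gap_eq_zero, mul_zero]
      simp only [List.length_drop, List.length_reverse] at hlt ⊢
      omega
    · rfl
  · refine (Finset.sum_subset (by simp) fun r _ hr => ?_).symm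
    have : (wordOf i).reverse[r]? = none := by
      simp at hr ⊢
      omega
    simp [coverVal, this]

/-- The open value of `V`, in terms of parsings in which only the first word may protrude. -/
noncomputable def openPoly (V : PWord) : Polynomial ℤ :=
  parsePoly false true V - Polynomial.X * gap false false [A] [] V +
    Polynomial.X * gap false false [A, A] [] V - Polynomial.X * gap false false [X, A] [] V

theorem openPoly_cons_X (V : PWord) : openPoly (X :: V) = openPoly V := by
  rcases V with _ | ⟨x, _ | ⟨y, V⟩⟩
  · simp [openPoly, gap, parsePoly]
  · rcases x <;> simp [openPoly, gap, parsePoly]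
  · rcases x <;> rcases y <;> simp [openPoly, gap, parsePoly]
    ring

theorem openPoly_concat_X (V : PWord) : openPoly (V ++ [X]) = openPoly V := by
  have h0 b s : parsePoly false b (s ++ [X]) = parsePoly false b s := by
    simp [parsePoly_append_X]
  rcases V with _ | ⟨x, _ | ⟨y, V⟩⟩
  · simp [openPoly, gap, parsePoly]
  · rcases x <;> simp [openPoly, gap, parsePoly]
  · have h1 b := h0 b (y :: V)
    have h2 b := h0 b (x :: y :: V)
    simp only [List.cons_append] at h1 h2
    simp [openPoly, gap, h0, h1, h2]

theorem openPoly_core (V : PWord) : openPoly (core V) = openPoly V := by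
  have h1 (s : PWord) : openPoly (s.dropWhile (· == X)) = openPoly s := by
    induction s with
    | nil => rfl
    | cons x s ih => rcases x <;> simp [ih, openPoly_cons_X]
  have h2 (s : PWord) : openPoly (s.rdropWhile (· == X)) = openPoly s := by
    induction s using List.reverseRecOn with
    | nil => rfl
    | append_singleton s x ih =>
      rcases x <;> simp [ih, openPoly_concat_X]
  exact (h2 _).trans (h1 V)

theorem core_ne_concat_X (V s : PWord) : core V ≠ s ++ [X] := by
  intro h
  have h' := congrArg List.reverse h
  have hd := List.head?_dropWhile_not (· == X) (V.dropWhile (· == X)).reverse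
  simp only [core, List.reverse_reverse] at h'
  simp [h'] at hd

theorem core_ne_cons_X (V s : PWord) : core V ≠ X :: s := by
  intro h
  obtain ⟨z, hz⟩ : core V <+: V.dropWhile (· == X) := List.rdropWhile_prefix _ _
  have hd := List.head?_dropWhile_not (· == X) V
  rw [← hz, h] at hd
  simp at hd

theorem core_concat_A (s : PWord) : core (s ++ [A]) = (s ++ [A]).dropWhile (· == X) := by
  have : ∃ z, (s ++ [A]).dropWhile (· == X) = z ++ [A] := by
    rw [List.dropWhile_append]
    split_ifs
    · exact ⟨[], rfl⟩
    · exact ⟨_, rfl⟩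
  obtain ⟨z, hz⟩ := this
  rw [core, hz]
  simp

theorem length_core_le (V : PWord) : (core V).length ≤ V.length := by
  simp only [core, List.length_reverse]
  refine (List.length_dropWhile_le _ _).trans ?_
  simpa using List.length_dropWhile_le _ _

theorem isOpenParsing_cons_iff {w : PWord} (hw : w ∈ tightWords) (W : PWord) (L : List PWord) :
    IsOpenParsing W (w :: L) ↔ (w ≠ [X] ∧ w ≠ [X, A] ∧ w ≠ [B, A]) ∧
      (∀ w' ∈ L, w' ∈ tightWords) ∧ List.IsChain (fun u v => ¬ Bad u v) (w :: (L ++ [[X]])) ∧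
        core W = w.dropWhile (· == X) ++ (L.flatten ++ []) := by
  have hchain : List.IsChain (fun u v => ¬ Bad u v) (w :: (L ++ [[X]])) ↔
      List.IsChain (fun u v => ¬ Bad u v) (w :: L) := by
    rw [← List.cons_append, List.isChain_append]
    simp [Bad]
  have hcore (hwX : w ≠ [X]) (htight : ∀ w' ∈ w :: L, w' ∈ tightWords)
      (hlast : (w :: L).getLast (by simp) ≠ [X]) :
      core (w :: L).flatten = w.dropWhile (· == X) ++ L.flatten := by
    have hends (v : PWord) (hv : v ∈ tightWords) (hX : v ≠ [X]) :
        ∃ z, v = z ++ [A] := by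
      simp only [tightWords, List.mem_cons, List.not_mem_nil, or_false] at hv
      rcases hv with rfl | rfl | rfl | rfl | rfl | rfl | rfl | rfl
      · exact absurd rfl hX
      all_goals exact ⟨_, (List.dropLast_append_getLast (by simp)).symm⟩
    obtain ⟨z, hz⟩ := hends _ (htight _ (List.getLast_mem _)) hlast
    have hflat : (w :: L).flatten = (w :: L).dropLast.flatten ++ z ++ [A] := by
      conv_lhs => rw [← List.dropLast_append_getLast (l := w :: L) (by simp), hz]
      simp
    rw [hflat, core_concat_A, ← hflat, List.flatten_cons, List.dropWhile_append, if_neg]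
    simp only [tightWords, List.mem_cons, List.not_mem_nil, or_false] at hw
    rcases hw with rfl | rfl | rfl | rfl | rfl | rfl | rfl | rfl <;> simp_all
  constructor
  · rintro ⟨ht, hc, hl⟩
    obtain ⟨h1, h2, h3, h4⟩ := hl (by simp)
    refine ⟨⟨h1, h2, h3⟩, fun w' hw' => ht.1 w' (List.mem_cons_of_mem _ hw'),
      hchain.2 ht.2, ?_⟩
    rw [← hc, hcore h1 ht.1 h4, List.append_nil]
  · rintro ⟨⟨h1, h2, h3⟩, ht, hc, he⟩
    have htight : ∀ w' ∈ w :: L, w' ∈ tightWords := List.forall_mem_cons.2 ⟨hw, ht⟩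
    have hlast : (w :: L).getLast (by simp) ≠ [X] := by
      intro hX
      rcases List.eq_nil_or_concat L with rfl | ⟨M, v, rfl⟩
      · exact h1 hX
      · obtain rfl : v = [X] := by simpa using hX
        exact core_ne_concat_X W (w.dropWhile (· == X) ++ M.flatten) (by simpa using he)
    refine ⟨⟨htight, hchain.1 hc⟩, ?_, fun _ => ⟨h1, h2, h3, hlast⟩⟩
    rw [hcore h1 htight hlast, he, List.append_nil]

theorem openVal_eq_openPoly (W : PWord) : openVal W = openPoly W := by
  have step (w : PWord) : wordSum (W.length + 2) (fun L => if IsOpenParsing W (w :: L) then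
        parseVal tightCoeff (w :: L) else 0) =
      if w ∈ tightWords ∧ w ≠ [X] ∧ w ≠ [X, A] ∧ w ≠ [B, A] then
        wordVal w * gap false false (w.dropWhile (· == X)) [] (core W) else 0 := by
    by_cases hw : w ∈ tightWords
    · simp only [isOpenParsing_cons_iff hw, hw, true_and]
      split_ifs with h
      · have hl := length_core_le W
        have hg := wordSum_gap (K := W.length + 2) w [X] (w.dropWhile (· == X)) [] (core W)
          (by omega)
        simp only [h.1, decide_false, List.cons.injEq, reduceCtorEq, and_false,
          or_false] at hg
        rw [← hg, ← wordSum_mul_left]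
        refine wordSum_congr fun L => ?_
        simp only [h, true_and, parseVal_cons, mul_ite, mul_zero, ne_eq, not_false_eq_true]
      · simp only [h, false_and, if_false, wordSum_zero]
    · have h (L : List PWord) : ¬ IsOpenParsing W (w :: L) := fun h => hw (h.1.1 w (by simp))
      simp [hw, h, wordSum_zero]
  have h0 : IsOpenParsing W [] ↔ core W = [] := by
    have hnil : core [] = [] := rfl
    simp [IsOpenParsing, tightChain_iff, hnil, eq_comm (a := ([] : PWord))]
  have hsum : openVal W = wordSum (W.length + 2 + 1) (fun L => if IsOpenParsing W L then
      parseVal tightCoeff L else 0) := rfl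
  rw [hsum, wordSum_succ_cons, Finset.sum_congr rfl fun i _ => step _, ← openPoly_core]
  simp only [h0, parseVal_nil]
  have hX := core_ne_cons_X W
  generalize core W = V at *
  simp only [Fin.sum_univ_succ]
  rcases V with _ | ⟨x, _ | ⟨y, _ | ⟨z, V⟩⟩⟩ <;> try rcases x <;> try rcases y <;> try rcases z
  all_goals
    first
    | exact absurd rfl (hX _)
    | simp [wordOf, tightWords, openPoly, gap, parsePoly, wordVal, tightCoeff, wordWt] <;> ring1

open PLetter in
/-- **Main cyclic identity.**  For every finite string `W`,
`|(WX)| + 2|(WB)| - |W| = 0` (cyclic and open values in the tight puzzle). -/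
theorem main_identity (W : PWord) :
    cycVal (W ++ [X]) + 2 * cycVal (W ++ [B]) - openVal W = 0 := by
  rw [openVal_eq_openPoly, cycVal_concat, cycVal_concat]
  simp only [Fin.sum_univ_succ, Finset.sum_range_succ, Finset.sum_range_zero]
  simp [wordOf, coverVal, tightWords, wordVal, tightCoeff, wordWt, openPoly]
  rcases W with _ | ⟨_ | _ | _, V⟩
  · simp [gap, parsePoly]
  · rcases List.eq_nil_or_concat V with rfl | ⟨m, c, rfl⟩
    · simp [gap, parsePoly]
      ring
    · have h := parsePoly_append_X
      have hA := parsePoly_append_ne_X (c := A) (by simp) true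
      have hB := parsePoly_append_ne_X (c := B) (by simp) true
      have hs (a c : PLetter) : [a] <:+ m ++ [c] ↔ a = c :=
        ⟨fun ⟨z, hz⟩ => by simpa using (List.append_inj' hz rfl).2, fun hac => ⟨m, by rw [hac]⟩⟩
      rcases c <;> simp [gap, h, hA, hB, hs] <;> ring1
  · simp [gap]
  · simp [gap]
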